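/- Let A be a separable C*-algebra, π an irreducible representation of A on a Hilbert space H_π, and φ a state of A vanishing on π⁻¹(K(H_π)) (the preimage of the compact operators) with ker π ⊆ ker π_φ. Then there exists an orthonormal sequence (ξ_n) in H_π such that the vector states a ↦ ⟨π(a)ξ_n, ξ_n⟩ converge to φ in the weak* topology. -/

import Mathlib

/-!
Choosing unit vectors more and more orthogonal to everything before, we let the *essential numerical
range* of a representation be the set of weak* cluster points of its vector functionals. It is
weak* closed, and it is convex since for nearly orthogonal `ξ`, `η` the vector functional of
`√α • ξ + √β • η` is nearly the convex combination of those of `ξ` and `η`. By Hahn–Banach it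
therefore contains every state `φ` such that `re ⟪ξ, π a ξ⟫ ≤ t` along such vectors forces
`re (φ a) ≤ t`.

When `φ` vanishes on `π⁻¹(K(H))` and `a` is self-adjoint, this implication holds because
`(π a - t)⁺` has finite rank. If `t ≥ 0`, it is the image of the cut-off `(a - t)⁺`, which `φ` kills
and which is within `t` of `a⁺`. If `t < 0` the cut-off is not available without a unit, so the case
of the bound `0` is applied to `‖c‖² a - t c⋆c` instead; it gives `φ (c⋆c) ≤ (φ a / t) ‖c‖²` for all
`c`, hence `1 = ‖φ‖ ≤ φ a / t`.

Weak* compact sets of functionals on a separable space are metrizable, so a cluster point is the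
limit of a sequence of vector functionals, and the vectors can be picked orthogonal to all earlier
ones.
-/

open NormedSpace Filter
open scoped ComplexInnerProductSpace

variable {A : Type*} [NonUnitalCStarAlgebra A] [StarModule ℂ A]

/-- A state on a C*-algebra: a positive linear functional of norm one. -/
def IsState (φ : A →L[ℂ] ℂ) : Prop :=
  ‖φ‖ = 1 ∧ ∀ a : A, 0 ≤ (φ (star a * a)).re ∧ (φ (star a * a)).im = 0

/-- A representation is (topologically) irreducible if it is nonzero and has no nontrivial
closed invariant subspaces. -/
def IsIrreducibleRep {H : Type*} [NormedAddCommGroup H] [InnerProductSpace ℂ H]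
    [CompleteSpace H] (π : A →⋆ₙₐ[ℂ] (H →L[ℂ] H)) : Prop :=
  π ≠ 0 ∧ ∀ S : Submodule ℂ H, IsClosed (S : Set H) →
    (∀ a : A, ∀ x ∈ S, π a x ∈ S) → S = ⊥ ∨ S = ⊤

section OrthogonalSphere

variable (𝕜 : Type*) {H : Type*} [RCLike 𝕜] [NormedAddCommGroup H] [InnerProductSpace 𝕜 H]

/-- The filter of unit vectors of `H` that are eventually orthogonal to each given vector: it is
generated by the unit spheres of the orthogonal complements of finite sets, so that orthonormal
sequences are built by choosing along it. It is `⊥` when `H` is finite-dimensional. -/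
def orthogonalSphereFilter (H : Type*) [NormedAddCommGroup H] [InnerProductSpace 𝕜 H] :
    Filter H :=
  𝓟 (Metric.sphere 0 1) ⊓ ⨅ x : H, 𝓟 {ξ | inner 𝕜 x ξ = 0}

namespace orthogonalSphereFilter

protected theorem eventually_iff {p : H → Prop} :
    (∀ᶠ ξ in orthogonalSphereFilter 𝕜 H, p ξ) ↔
      ∃ s : Finset H, ∀ ξ, ‖ξ‖ = 1 → (∀ x ∈ s, inner 𝕜 x ξ = 0) → p ξ := by
  have hbasis := hasBasis_iInf_principal_finite fun x : H ↦ {ξ | inner 𝕜 x ξ = 0}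
  rw [orthogonalSphereFilter, inf_comm, eventually_inf_principal, hbasis.eventually_iff]
  constructor
  · rintro ⟨t, ht, h⟩
    exact ⟨ht.toFinset, fun ξ hξ hs ↦ h (by simpa using hs) (by simpa using hξ)⟩
  · rintro ⟨s, h⟩
    exact ⟨s, s.finite_toSet, fun ξ hs hξ ↦ h ξ (by simpa using hξ) (by simpa using hs)⟩

theorem eventually_norm_eq_one :
    ∀ᶠ ξ in orthogonalSphereFilter 𝕜 H, ‖ξ‖ = 1 :=
  (orthogonalSphereFilter.eventually_iff 𝕜).2 ⟨∅, fun _ hξ _ ↦ hξ⟩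

theorem eventually_inner_eq_zero (x : H) :
    ∀ᶠ ξ in orthogonalSphereFilter 𝕜 H, inner 𝕜 x ξ = 0 :=
  (orthogonalSphereFilter.eventually_iff 𝕜).2 ⟨{x}, fun _ _ hξ ↦ hξ x (by simp)⟩

variable {𝕜}

theorem finiteDimensional_of_eventually_notMem {V : Submodule 𝕜 H}
    (hV : ∀ᶠ ξ in orthogonalSphereFilter 𝕜 H, ξ ∉ V) : FiniteDimensional 𝕜 V := by
  obtain ⟨s, hs⟩ := (orthogonalSphereFilter.eventually_iff 𝕜).1 hV
  let L : V →ₗ[𝕜] (s → 𝕜) := LinearMap.pi fun x ↦ (innerₛₗ 𝕜 (x : H)).comp V.subtype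
  refine FiniteDimensional.of_injective L ((injective_iff_map_eq_zero L).2 ?_)
  intro ζ hζ
  by_contra hne
  have hne' : (ζ : H) ≠ 0 := by simpa using hne
  refine hs ((‖(ζ : H)‖⁻¹ : 𝕜) • (ζ : H)) (norm_smul_inv_norm hne') (fun x hx ↦ ?_)
    (V.smul_mem _ ζ.2)
  have hx' : inner 𝕜 x (ζ : H) = 0 := congrFun hζ ⟨x, hx⟩
  rw [inner_smul_right, hx', mul_zero]

theorem eventually_eventually_smul_add_smul {p : H → Prop}
    (hp : ∀ᶠ ξ in orthogonalSphereFilter 𝕜 H, p ξ) :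
    ∀ᶠ ξ in orthogonalSphereFilter 𝕜 H, ∀ c d : 𝕜, ‖c‖ ^ 2 + ‖d‖ ^ 2 = 1 →
      ∀ᶠ η in orthogonalSphereFilter 𝕜 H, p (c • ξ + d • η) := by
  obtain ⟨s, hs⟩ := (orthogonalSphereFilter.eventually_iff 𝕜).1 hp
  refine (orthogonalSphereFilter.eventually_iff 𝕜).2 ⟨s, fun ξ hξ hsξ c d hcd ↦ ?_⟩
  classical
  refine (orthogonalSphereFilter.eventually_iff 𝕜).2 ⟨insert ξ s, fun η hη hsη ↦ hs _ ?_ ?_⟩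
  · have horth : inner 𝕜 (c • ξ) (d • η) = 0 := by
      simp only [inner_smul_left, inner_smul_right, hsη ξ (s.mem_insert_self ξ), mul_zero]
    have := norm_add_sq_eq_norm_sq_add_norm_sq_of_inner_eq_zero _ _ horth
    rw [← pow_eq_one_iff_of_nonneg (norm_nonneg _) two_ne_zero, sq, this, norm_smul, norm_smul,
      hξ, hη, mul_one, mul_one, ← sq, ← sq, hcd]
  · intro x hx
    rw [inner_add_right, inner_smul_right, inner_smul_right, hsξ x hx,
      hsη x (Finset.mem_insert_of_mem hx), mul_zero, mul_zero, add_zero]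

end orthogonalSphereFilter

end OrthogonalSphere

theorem exists_seq_of_frequently_of_eventually {α : Type*} {l : Filter α}
    {p : ℕ → α → Prop} {r : α → α → Prop} (hp : ∀ n, ∃ᶠ x in l, p n x)
    (hr : ∀ x, ∀ᶠ y in l, r x y) :
    ∃ u : ℕ → α, (∀ n, p n (u n)) ∧ ∀ m n, m < n → r (u m) (u n) := by
  classical
  have hnext (n : ℕ) (s : Finset α) : ∃ y, p n y ∧ ∀ x ∈ s, r x y :=
    ((hp n).and_eventually ((eventually_all_finset s).2 fun x _ ↦ hr x)).exists
  choose next hnext_p hnext_r using hnext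
  let s : ℕ → Finset α := Nat.rec ∅ fun n t ↦ insert (next n t) t
  have hs : Monotone s := monotone_nat_of_le_succ fun n ↦ Finset.subset_insert _ _
  refine ⟨fun n ↦ next n (s n), fun n ↦ hnext_p n _, fun m n hmn ↦ hnext_r n _ _ ?_⟩
  exact hs (Nat.succ_le_of_lt hmn) (Finset.mem_insert_self _ _)

section EssentialNumericalRange

open orthogonalSphereFilter

variable {𝕜 E H : Type*} [RCLike 𝕜] [NormedAddCommGroup E] [NormedSpace 𝕜 E]
  [NormedAddCommGroup H] [InnerProductSpace 𝕜 H]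

/-- The functional `a ↦ ⟪ξ, T a ξ⟫` attached to a family of operators depending linearly on `a`,
such as a representation; it is a vector state when `ξ` is a unit vector. It lives in the weak dual
because its limits are taken in the weak* topology. -/
noncomputable def vectorFunctional (T : E →L[𝕜] H →L[𝕜] H) (ξ : H) : WeakDual 𝕜 E :=
  StrongDual.toWeakDual ((innerSL 𝕜 ξ).comp (T.flip ξ))

@[simp]
theorem vectorFunctional_apply (T : E →L[𝕜] H →L[𝕜] H) (ξ : H) (a : E) :
    vectorFunctional T ξ a = inner 𝕜 ξ (T a ξ) :=
  rfl

theorem norm_vectorFunctional_le (T : E →L[𝕜] H →L[𝕜] H) (ξ : H) :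
    ‖WeakDual.toStrongDual (vectorFunctional T ξ)‖ ≤ ‖T‖ * ‖ξ‖ ^ 2 :=
  calc ‖(innerSL 𝕜 ξ).comp (T.flip ξ)‖ ≤ ‖innerSL 𝕜 ξ‖ * ‖T.flip ξ‖ :=
        ContinuousLinearMap.opNorm_comp_le _ _
    _ ≤ ‖ξ‖ * (‖T‖ * ‖ξ‖) := by
        rw [innerSL_apply_norm, ← T.opNorm_flip]
        gcongr
        exact T.flip.le_opNorm ξ
    _ = ‖T‖ * ‖ξ‖ ^ 2 := by ring

/-- The joint essential numerical range of the operators `T a`: the weak* cluster points of their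
vector functionals along unit vectors that leave every finite-dimensional subspace. -/
def essentialNumericalRange (T : E →L[𝕜] H →L[𝕜] H) : Set (WeakDual 𝕜 E) :=
  {φ | MapClusterPt φ (orthogonalSphereFilter 𝕜 H) (vectorFunctional T)}

theorem isClosed_essentialNumericalRange (T : E →L[𝕜] H →L[𝕜] H) :
    IsClosed (essentialNumericalRange T) :=
  isClosed_setOfPred_clusterPt

theorem eventually_vectorFunctional_smul_add_smul [CompleteSpace H] (T : E →L[𝕜] H →L[𝕜] H)
    (ξ : H) (c d : 𝕜) (a : E) :
    ∀ᶠ η in orthogonalSphereFilter 𝕜 H, vectorFunctional T (c • ξ + d • η) a =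
      (‖c‖ ^ 2 • vectorFunctional T ξ + ‖d‖ ^ 2 • vectorFunctional T η : WeakDual 𝕜 E) a := by
  filter_upwards [eventually_inner_eq_zero 𝕜 (T a ξ),
    eventually_inner_eq_zero 𝕜 (ContinuousLinearMap.adjoint (T a) ξ)] with η hη hη'
  rw [ContinuousLinearMap.adjoint_inner_left] at hη'
  have hη₀ : inner 𝕜 η (T a ξ) = 0 := inner_eq_zero_symm.1 hη
  change inner 𝕜 (c • ξ + d • η) (T a (c • ξ + d • η)) =
    ‖c‖ ^ 2 • inner 𝕜 ξ (T a ξ) + ‖d‖ ^ 2 • inner 𝕜 η (T a η)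
  simp only [map_add, map_smul, inner_add_left, inner_add_right, inner_smul_left,
    inner_smul_right, hη₀, hη', RCLike.real_smul_eq_coe_mul, RCLike.ofReal_pow, ← RCLike.conj_mul]
  ring

theorem tendsto_weakDual_iff {α : Type*} {l : Filter α} {f : α → WeakDual 𝕜 E}
    {φ : WeakDual 𝕜 E} :
    Tendsto f l (nhds φ) ↔ ∀ a, Tendsto (fun x ↦ f x a) l (nhds (φ a)) :=
  tendsto_iff_forall_eval_tendsto_topDualPairing

theorem convex_essentialNumericalRange [CompleteSpace H] (T : E →L[𝕜] H →L[𝕜] H) :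
    Convex ℝ (essentialNumericalRange T) := by
  intro φ hφ ψ hψ α β hα hβ hαβ
  obtain ⟨U, hU, hUφ⟩ := mapClusterPt_iff_ultrafilter.1 hφ
  obtain ⟨V, hV, hVψ⟩ := mapClusterPt_iff_ultrafilter.1 hψ
  refine clusterPt_iff_forall_mem_closure.2 fun S hS ↦ ?_
  have hsqrt {γ : ℝ} (hγ : 0 ≤ γ) : ‖(√γ : 𝕜)‖ ^ 2 = γ := by
    rw [RCLike.norm_ofReal, sq_abs, Real.sq_sqrt hγ]
  have hmem : ∀ᶠ ξ in U, α • vectorFunctional T ξ + β • ψ ∈ closure S := by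
    filter_upwards [hU (eventually_eventually_smul_add_smul hS)] with ξ hξ
    have hlim : Tendsto (fun η ↦ vectorFunctional T ((√α : 𝕜) • ξ + (√β : 𝕜) • η)) V
        (nhds (α • vectorFunctional T ξ + β • ψ)) := by
      refine tendsto_weakDual_iff.2 fun a ↦ ?_
      have hsum := (hVψ.const_smul β).const_add (α • vectorFunctional T ξ)
      refine (tendsto_weakDual_iff.1 hsum a).congr' ?_
      filter_upwards [hV (eventually_vectorFunctional_smul_add_smul T ξ √α √β a)] with η hη
      rw [hη, hsqrt hα, hsqrt hβ]
    exact mem_closure_of_tendsto hlim (hV (hξ _ _ (by rw [hsqrt hα, hsqrt hβ, hαβ])))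
  exact isClosed_closure.mem_of_tendsto ((hUφ.const_smul α).add_const (β • ψ)) hmem

theorem eventually_vectorFunctional_mem_closedBall (T : E →L[𝕜] H →L[𝕜] H) :
    ∀ᶠ ξ in orthogonalSphereFilter 𝕜 H,
      vectorFunctional T ξ ∈ WeakDual.toStrongDual ⁻¹' Metric.closedBall 0 ‖T‖ := by
  filter_upwards [eventually_norm_eq_one 𝕜] with ξ hξ
  simpa [hξ] using norm_vectorFunctional_le T ξ

theorem eventually_vectorFunctional_mem_of_isOpen (T : E →L[𝕜] H →L[𝕜] H)
    {U : Set (WeakDual 𝕜 E)} (hU : IsOpen U) (hTU : essentialNumericalRange T ⊆ U) :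
    ∀ᶠ ξ in orthogonalSphereFilter 𝕜 H, vectorFunctional T ξ ∈ U := by
  by_contra hcon
  have hcompact := (WeakDual.isCompact_closedBall (𝕜 := 𝕜) (0 : StrongDual 𝕜 E) ‖T‖).diff hU
  have hfreq : ∃ᶠ ξ in orthogonalSphereFilter 𝕜 H, vectorFunctional T ξ ∈
      WeakDual.toStrongDual ⁻¹' Metric.closedBall 0 ‖T‖ \ U :=
    (eventually_vectorFunctional_mem_closedBall T).and_frequently (not_eventually.1 hcon)
  obtain ⟨φ, hφ, hφT⟩ := hcompact.exists_mapClusterPt_of_frequently hfreq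
  exact hφ.2 (hTU hφT)

theorem exists_forall_re_apply_lt_of_notMem {S : Set (WeakDual 𝕜 E)} (hconv : Convex ℝ S)
    (hclosed : IsClosed S) {φ : WeakDual 𝕜 E} (hφ : φ ∉ S) :
    ∃ (a : E) (t : ℝ), (∀ ψ ∈ S, RCLike.re (ψ a) < t) ∧ t < RCLike.re (φ a) := by
  have : IsScalarTower ℝ 𝕜 (WeakDual 𝕜 E) :=
    inferInstanceAs (IsScalarTower ℝ 𝕜 (E →L[𝕜] 𝕜))
  have : LocallyConvexSpace ℝ (WeakDual 𝕜 E) :=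
    LocallyConvexSpace.induced (F := E → 𝕜)
      { toFun := fun (ψ : WeakDual 𝕜 E) a ↦ ψ a
        map_add' := fun _ _ ↦ rfl
        map_smul' := fun _ _ ↦ rfl }
  obtain ⟨f, t, hft, hfφ⟩ : ∃ (f : StrongDual 𝕜 (WeakDual 𝕜 E)) (t : ℝ),
      (∀ ψ ∈ S, RCLike.re (f ψ) < t) ∧ t < RCLike.re (f φ) := by
    -- `hconv` is given last: unifying its scalar action with the expected one first is very slow.
    refine RCLike.geometric_hahn_banach_closed_point (E := WeakDual 𝕜 E) ?_ hclosed hφ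
    exact hconv
  obtain ⟨a, ha⟩ := LinearMap.dualEmbedding_surjective (topDualPairing 𝕜 E) f
  have hfa (ψ : WeakDual 𝕜 E) : f ψ = ψ a := (DFunLike.congr_fun ha ψ).symm
  simp only [hfa] at hft hfφ
  exact ⟨a, t, hft, hfφ⟩

theorem mem_essentialNumericalRange_of_forall_re_le [CompleteSpace H] (T : E →L[𝕜] H →L[𝕜] H)
    (φ : WeakDual 𝕜 E)
    (h : ∀ (a : E) (t : ℝ), (∀ᶠ ξ in orthogonalSphereFilter 𝕜 H,
      RCLike.re (inner 𝕜 ξ (T a ξ)) ≤ t) → RCLike.re (φ a) ≤ t) :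
    φ ∈ essentialNumericalRange T := by
  by_contra hφ
  obtain ⟨a, t, hlt, hφt⟩ := exists_forall_re_apply_lt_of_notMem
    (convex_essentialNumericalRange T) (isClosed_essentialNumericalRange T) hφ
  have hopen : IsOpen {ψ : WeakDual 𝕜 E | RCLike.re (ψ a) < t} :=
    isOpen_lt (RCLike.continuous_re.comp (WeakDual.eval_continuous a)) continuous_const
  exact hφt.not_ge (h a t ((eventually_vectorFunctional_mem_of_isOpen T hopen hlt).mono
    fun _ hξ ↦ le_of_lt hξ))

theorem exists_orthonormal_tendsto_of_mem_essentialNumericalRange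
    [TopologicalSpace.SeparableSpace E] {T : E →L[𝕜] H →L[𝕜] H} {φ : WeakDual 𝕜 E}
    (hφ : φ ∈ essentialNumericalRange T) :
    ∃ ξ : ℕ → H, Orthonormal 𝕜 ξ ∧
      Tendsto (fun n ↦ vectorFunctional T (ξ n)) atTop (nhds φ) := by
  set K : Set (WeakDual 𝕜 E) := WeakDual.toStrongDual ⁻¹' Metric.closedBall 0 ‖T‖
  have hK : IsCompact K := WeakDual.isCompact_closedBall 0 ‖T‖
  have hvK : ∀ᶠ ξ in orthogonalSphereFilter 𝕜 H, vectorFunctional T ξ ∈ K :=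
    eventually_vectorFunctional_mem_closedBall T
  have hφK : φ ∈ K := hK.isClosed.mem_of_mapClusterPt hφ hvK
  have := WeakDual.metrizable_of_isCompact 𝕜 E K hK
  have : (nhdsWithin φ K).IsCountablyGenerated := by
    rw [nhdsWithin_eq_map_subtype_coe hφK]
    infer_instance
  obtain ⟨W, hW⟩ := (nhdsWithin φ K).exists_antitone_basis
  have hfreq (n : ℕ) :
      ∃ᶠ ξ in orthogonalSphereFilter 𝕜 H, ‖ξ‖ = 1 ∧ vectorFunctional T ξ ∈ W n := by
    have hmem : ∀ᶠ ψ in nhds φ, ψ ∈ K → ψ ∈ W n := eventually_nhdsWithin_iff.1 (hW.mem n)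
    refine ((hφ.frequently hmem).and_eventually (hvK.and (eventually_norm_eq_one 𝕜))).mono ?_
    exact fun ξ ⟨hξW, hξK, hξ⟩ ↦ ⟨hξ, hξW hξK⟩
  obtain ⟨ξ, hξ, horth⟩ :=
    exists_seq_of_frequently_of_eventually hfreq (eventually_inner_eq_zero 𝕜)
  refine ⟨ξ, ⟨fun n ↦ (hξ n).1, ?_⟩,
    (hW.tendsto fun n ↦ (hξ n).2).mono_right nhdsWithin_le_nhds⟩
  have : Std.Symm fun m n ↦ inner 𝕜 (ξ m) (ξ n) = 0 := ⟨fun _ _ ↦ inner_eq_zero_symm.1⟩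
  exact Pairwise.of_lt horth

end EssentialNumericalRange

section CompactOperator

open orthogonalSphereFilter

theorem isCompactOperator_of_finiteDimensional_range {𝕜 E F : Type*}
    [NontriviallyNormedField 𝕜] [LocallyCompactSpace 𝕜]
    [AddCommGroup E] [Module 𝕜 E] [TopologicalSpace E] [AddCommGroup F] [Module 𝕜 F]
    [TopologicalSpace F] [IsTopologicalAddGroup F] [ContinuousSMul 𝕜 F] [T2Space F]
    (X : E →L[𝕜] F) [FiniteDimensional 𝕜 X.range] : IsCompactOperator X := by
  have : ProperSpace 𝕜 := .of_locallyCompactSpace 𝕜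
  have hid : IsCompactOperator (id : X.range → X.range) :=
    isCompactOperator_id_iff_finiteDimensional.2 ‹_›
  exact (hid.comp_clm (X.codRestrict X.range fun ζ ↦ ⟨ζ, rfl⟩)).clm_comp X.range.subtypeL

variable {H : Type*} [NormedAddCommGroup H] [InnerProductSpace ℂ H] [CompleteSpace H]

theorem apply_eq_zero_of_re_inner_nonpos {P : H →L[ℂ] H} (hP : 0 ≤ P) {ξ : H}
    (hξ : (⟪ξ, P ξ⟫).re ≤ 0) : P ξ = 0 := by
  obtain ⟨S, rfl⟩ := CStarAlgebra.nonneg_iff_eq_star_mul_self.1 hP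
  have hSξ : (⟪ξ, (star S * S) ξ⟫).re = ‖S ξ‖ ^ 2 :=
    (S.apply_norm_sq_eq_inner_adjoint_right ξ).symm
  have hzero : S ξ = 0 := by
    rw [hSξ] at hξ
    simpa using hξ.antisymm (sq_nonneg _)
  rw [mul_apply_eq_comp, hzero, map_zero]

theorem isCompactOperator_posPart {X : H →L[ℂ] H} (hX : IsSelfAdjoint X)
    (hle : ∀ᶠ ξ in orthogonalSphereFilter ℂ H, (⟪ξ, X ξ⟫).re ≤ 0) :
    IsCompactOperator (X⁺ : H →L[ℂ] H) := by
  have hmul : X * X⁺ = X⁺ * X⁺ := by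
    nth_rw 1 [← CFC.posPart_sub_negPart X hX]
    rw [sub_mul, CFC.negPart_mul_posPart, sub_zero]
  have hpos : (X⁺).IsPositive :=
    (ContinuousLinearMap.nonneg_iff_isPositive _).1 (CFC.posPart_nonneg X)
  have : FiniteDimensional ℂ (X⁺).range := by
    refine finiteDimensional_of_eventually_notMem ?_
    filter_upwards [hle, eventually_norm_eq_one ℂ] with ξ hξ hnorm
    rintro ⟨ζ, rfl : X⁺ ζ = ξ⟩
    have hX_eq : X (X⁺ ζ) = X⁺ (X⁺ ζ) := DFunLike.congr_fun hmul ζ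
    rw [hX_eq] at hξ
    have hker : X⁺ (X⁺ ζ) = 0 := apply_eq_zero_of_re_inner_nonpos (CFC.posPart_nonneg X) hξ
    have hself : ⟪X⁺ ζ, X⁺ ζ⟫ = 0 := by
      rw [hpos.inner_left_eq_inner_right, hker, inner_zero_right]
    rw [inner_self_eq_zero.1 hself, norm_zero] at hnorm
    exact zero_ne_one hnorm
  exact isCompactOperator_of_finiteDimensional_range _

end CompactOperator

section State

open orthogonalSphereFilter
open scoped CStarAlgebra ComplexOrder ComplexStarModule

variable {B : Type*} [NonUnitalCStarAlgebra B]
  {H : Type*} [NormedAddCommGroup H] [InnerProductSpace ℂ H] [CompleteSpace H]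

theorem map_cfcₙ_posPart_sub {C : Type*} [CStarAlgebra C] (ρ : B →⋆ₙₐ[ℂ] C) {h : B}
    (hh : IsSelfAdjoint h) {t : ℝ} (ht : 0 ≤ t) :
    ρ (cfcₙ (fun x : ℝ ↦ (x - t)⁺) h) = (ρ h - algebraMap ℝ C t)⁺ := by
  have hρh : IsSelfAdjoint (ρ h) := hh.map ρ
  have hzero : ((0 : ℝ) - t)⁺ = 0 := posPart_eq_zero.2 (by linarith)
  have hsub : ρ h - algebraMap ℝ C t = cfc (fun x : ℝ ↦ x - t) (ρ h) := by
    rw [cfc_sub (fun x : ℝ ↦ x) (fun _ ↦ t) (ρ h), cfc_id' ℝ (ρ h), cfc_const t (ρ h)]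
  have hcont : Continuous fun x : ℝ ↦ (x - t)⁺ := by fun_prop
  rw [NonUnitalStarAlgHomClass.map_cfcₙ (S := ℂ) ρ _ h hcont.continuousOn hzero
    (map_continuous ρ) hh hρh, cfcₙ_eq_cfc hcont.continuousOn hzero,
    CFC.posPart_def, cfcₙ_eq_cfc, hsub, ← cfc_comp' (fun x : ℝ ↦ x⁺) (fun x ↦ x - t) (ρ h)]

theorem norm_posPart_sub_cfcₙ_posPart_sub_le (h : B) {t : ℝ} (ht : 0 ≤ t) :
    ‖h⁺ - cfcₙ (fun x : ℝ ↦ (x - t)⁺) h‖ ≤ t := by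
  have hzero : ((0 : ℝ) - t)⁺ = 0 := posPart_eq_zero.2 (by linarith)
  have hcont : Continuous fun x : ℝ ↦ (x - t)⁺ := by fun_prop
  rw [CFC.posPart_def, ← cfcₙ_sub _ _ h (by fun_prop) posPart_zero hcont.continuousOn hzero]
  refine norm_cfcₙ_le fun x _ ↦ ?_
  have hle : (x - t)⁺ ≤ x⁺ := posPart_mono (by linarith)
  have hge : x⁺ ≤ (x - t)⁺ + t :=
    sup_le (by linarith [le_posPart (x - t)]) (by linarith [posPart_nonneg (x - t)])
  rw [Real.norm_of_nonneg (sub_nonneg.2 hle)]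
  linarith

theorem IsState.norm_apply_star_mul_self {φ : B →L[ℂ] ℂ} (hφ : IsState φ) (c : B) :
    ‖φ (star c * c)‖ = (φ (star c * c)).re := by
  obtain ⟨hre, him⟩ := hφ.2 c
  exact (Complex.re_eq_norm.2 (Complex.nonneg_iff.2 ⟨hre, him.symm⟩)).symm

theorem eventually_re_inner_smul_sub_smul_star_mul_self_nonpos {ρ : B →⋆ₙₐ[ℂ] (H →L[ℂ] H)}
    {h : B} {t : ℝ} (ht : t ≤ 0)
    (hle : ∀ᶠ ξ in orthogonalSphereFilter ℂ H, (⟪ξ, ρ h ξ⟫).re ≤ t) (c : B) :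
    ∀ᶠ ξ in orthogonalSphereFilter ℂ H,
      (⟪ξ, ρ (‖c‖ ^ 2 • h - t • (star c * c)) ξ⟫).re ≤ 0 := by
  filter_upwards [hle, eventually_norm_eq_one ℂ] with ξ hξ hnorm
  have hc : ‖ρ c ξ‖ ≤ ‖c‖ := by
    simpa [hnorm] using (ρ c).le_of_opNorm_le (NonUnitalStarAlgHom.norm_apply_le ρ c) ξ
  have hcc : (⟪ξ, ρ (star c * c) ξ⟫).re = ‖ρ c ξ‖ ^ 2 := by
    rw [map_mul, map_star]
    exact ((ρ c).apply_norm_sq_eq_inner_adjoint_right ξ).symm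
  have hρ (s : ℝ) (b : B) : ρ (s • b) = (s : ℂ) • ρ b := by
    rw [← map_smul, Complex.coe_smul]
  calc (⟪ξ, ρ (‖c‖ ^ 2 • h - t • (star c * c)) ξ⟫).re
      = ‖c‖ ^ 2 * (⟪ξ, ρ h ξ⟫).re - t * ‖ρ c ξ‖ ^ 2 := by
        rw [map_sub, hρ, hρ, sub_apply, inner_sub_right, smul_apply, smul_apply, inner_smul_right,
          inner_smul_right, Complex.sub_re, Complex.re_ofReal_mul, Complex.re_ofReal_mul, hcc]
    _ ≤ ‖c‖ ^ 2 * t - t * ‖c‖ ^ 2 := by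
        have hsq : ‖ρ c ξ‖ ^ 2 ≤ ‖c‖ ^ 2 := by gcongr
        exact sub_le_sub (by gcongr) (mul_le_mul_of_nonpos_left hsq ht)
    _ = 0 := by ring

variable [PartialOrder B] [StarOrderedRing B]

theorem norm_apply_star_mul_sq_le (f : B →ₚ[ℂ] ℂ) (a b : B) :
    ‖f (star a * b)‖ ^ 2 ≤ ‖f (star a * a)‖ * ‖f (star b * b)‖ := by
  have hnorm (c : B) : ‖f.toPreGNS c‖ ^ 2 = ‖f (star c * c)‖ := by
    have h := congrArg norm (f.preGNS_norm_sq (f.toPreGNS c))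
    rwa [← Complex.ofReal_pow, Complex.norm_real, Real.norm_of_nonneg (sq_nonneg _)] at h
  rw [← hnorm a, ← hnorm b, ← mul_pow]
  exact pow_le_pow_left₀ (norm_nonneg _)
    (norm_inner_le_norm (𝕜 := ℂ) (f.toPreGNS a) (f.toPreGNS b)) 2

theorem norm_apply_le_of_forall_star_mul_self {f : B →ₚ[ℂ] ℂ} {r : ℝ} (hr : 0 ≤ r)
    (hf : ∀ c, ‖f (star c * c)‖ ≤ r * ‖c‖ ^ 2) (b : B) : ‖f b‖ ≤ r * ‖b‖ := by
  have hunit := CStarAlgebra.increasingApproximateUnit B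
  have := hunit.neBot
  have htends := ((map_continuous f).tendsto b).comp (hunit.tendsto_mul_right b)
  refine le_of_tendsto htends.norm ?_
  filter_upwards [hunit.eventually_norm, hunit.eventually_star_eq] with e he hself
  refine le_of_sq_le_sq ?_ (by positivity)
  calc ‖f (e * b)‖ ^ 2 ≤ ‖f (star e * e)‖ * ‖f (star b * b)‖ := by
        simpa only [hself] using norm_apply_star_mul_sq_le f e b
    _ ≤ (r * 1 ^ 2) * (r * ‖b‖ ^ 2) := by
        gcongr
        · exact (hf e).trans (by gcongr)
        · exact hf b
    _ = (r * ‖b‖) ^ 2 := by ring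

theorem re_apply_le_of_eventually_le_of_nonneg {ρ : B →⋆ₙₐ[ℂ] (H →L[ℂ] H)} {f : B →ₚ[ℂ] ℂ}
    (hf : ∀ b, ‖f b‖ ≤ ‖b‖) (hvanish : ∀ b, IsCompactOperator (ρ b) → f b = 0) {h : B}
    (hh : IsSelfAdjoint h) {t : ℝ} (ht : 0 ≤ t)
    (hle : ∀ᶠ ξ in orthogonalSphereFilter ℂ H, (⟪ξ, ρ h ξ⟫).re ≤ t) : (f h).re ≤ t := by
  set k := cfcₙ (fun x : ℝ ↦ (x - t)⁺) h
  have hk : f k = 0 := by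
    refine hvanish _ ?_
    rw [map_cfcₙ_posPart_sub ρ hh ht]
    refine isCompactOperator_posPart ((hh.map ρ).sub (IsSelfAdjoint.algebraMap _ (.all t))) ?_
    filter_upwards [hle, eventually_norm_eq_one ℂ] with ξ hξ hnorm
    simpa [inner_sub_right, Algebra.algebraMap_eq_smul_one, inner_smul_right, hnorm] using hξ
  calc (f h).re ≤ (f h⁺).re := (Complex.le_def.1 (OrderHomClass.mono f (CFC.le_posPart hh))).1
    _ = (f (h⁺ - k)).re := by rw [map_sub, hk, sub_zero]
    _ ≤ ‖h⁺ - k‖ := (Complex.re_le_norm _).trans (hf _)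
    _ ≤ t := norm_posPart_sub_cfcₙ_posPart_sub_le h ht

/-- A state as a positive linear functional. -/
noncomputable def IsState.toPositiveLinearMap {φ : B →L[ℂ] ℂ} (hφ : IsState φ) : B →ₚ[ℂ] ℂ :=
  .mk₀ φ.toLinearMap fun b hb ↦ by
    obtain ⟨c, rfl⟩ := CStarAlgebra.nonneg_iff_eq_star_mul_self.1 hb
    exact Complex.nonneg_iff.2 ⟨(hφ.2 c).1, (hφ.2 c).2.symm⟩

theorem IsState.re_apply_le_of_isSelfAdjoint {ρ : B →⋆ₙₐ[ℂ] (H →L[ℂ] H)} {φ : B →L[ℂ] ℂ}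
    (hφ : IsState φ) (hvanish : ∀ b, IsCompactOperator (ρ b) → φ b = 0) {h : B}
    (hh : IsSelfAdjoint h) {t : ℝ}
    (hle : ∀ᶠ ξ in orthogonalSphereFilter ℂ H, (⟪ξ, ρ h ξ⟫).re ≤ t) : (φ h).re ≤ t := by
  have hbound (b : B) : ‖φ b‖ ≤ ‖b‖ := by simpa [hφ.1] using φ.le_opNorm b
  have hnonneg {k : B} (hk : IsSelfAdjoint k) {s : ℝ} (hs : 0 ≤ s)
      (hles : ∀ᶠ ξ in orthogonalSphereFilter ℂ H, (⟪ξ, ρ k ξ⟫).re ≤ s) : (φ k).re ≤ s :=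
    re_apply_le_of_eventually_le_of_nonneg (f := hφ.toPositiveLinearMap) hbound hvanish hk hs hles
  obtain ht | ht := le_or_gt 0 t
  · exact hnonneg hh ht hle
  have hr : 0 ≤ (φ h).re / t :=
    div_nonneg_of_nonpos (hnonneg hh le_rfl (hle.mono fun _ hξ ↦ hξ.trans ht.le)) ht.le
  have hsq (c : B) : ‖φ (star c * c)‖ ≤ (φ h).re / t * ‖c‖ ^ 2 := by
    have hk : IsSelfAdjoint (‖c‖ ^ 2 • h - t • (star c * c)) :=
      ((IsSelfAdjoint.all _).smul hh).sub ((IsSelfAdjoint.all t).smul (.star_mul_self c))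
    have hφk : (φ (‖c‖ ^ 2 • h - t • (star c * c))).re ≤ 0 :=
      hnonneg hk le_rfl (eventually_re_inner_smul_sub_smul_star_mul_self_nonpos ht.le hle c)
    rw [map_sub, φ.map_smul_of_tower, φ.map_smul_of_tower, Complex.sub_re, Complex.smul_re,
      Complex.smul_re, smul_eq_mul, smul_eq_mul] at hφk
    rw [hφ.norm_apply_star_mul_self, div_mul_eq_mul_div, le_div_iff_of_neg ht]
    linarith
  have hnorm : ‖φ‖ ≤ (φ h).re / t := φ.opNorm_le_bound hr
    (norm_apply_le_of_forall_star_mul_self (f := hφ.toPositiveLinearMap) hr hsq)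
  rwa [hφ.1, one_le_div_of_neg ht] at hnorm

theorem re_inner_realPart_apply (X : H →L[ℂ] H) (ξ : H) :
    (⟪ξ, (ℜ X : H →L[ℂ] H) ξ⟫).re = (⟪ξ, X ξ⟫).re := by
  have hstar : (⟪ξ, star X ξ⟫).re = (⟪ξ, X ξ⟫).re := by
    rw [ContinuousLinearMap.star_eq_adjoint, ContinuousLinearMap.adjoint_inner_right,
      ← inner_conj_symm, Complex.conj_re]
  rw [realPart_apply_coe, ← Complex.coe_smul, smul_apply, inner_smul_right, Complex.re_ofReal_mul,
    add_apply, inner_add_right, Complex.add_re, hstar]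
  ring

theorem IsState.re_apply_le {ρ : B →⋆ₙₐ[ℂ] (H →L[ℂ] H)} {φ : B →L[ℂ] ℂ} (hφ : IsState φ)
    (hvanish : ∀ b, IsCompactOperator (ρ b) → φ b = 0) {a : B} {t : ℝ}
    (hle : ∀ᶠ ξ in orthogonalSphereFilter ℂ H, (⟪ξ, ρ a ξ⟫).re ≤ t) : (φ a).re ≤ t := by
  have hφ_re : (φ (ℜ a : B)).re = (φ a).re := by
    have hreal : φ (ℜ a : B) = (ℜ (φ a) : ℂ) := map_realPart hφ.toPositiveLinearMap a
    rw [hreal, Complex.coe_realPart, Complex.ofReal_re]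
  rw [← hφ_re]
  refine hφ.re_apply_le_of_isSelfAdjoint hvanish (ℜ a).2 ?_
  simpa only [map_realPart ρ, re_inner_realPart_apply] using hle

end State

open scoped CStarAlgebra in
theorem anderson_orthonormal_vector_states_general {B H : Type*} [NonUnitalCStarAlgebra B]
    [TopologicalSpace.SeparableSpace B] [NormedAddCommGroup H] [InnerProductSpace ℂ H]
    [CompleteSpace H] (π : B →⋆ₙₐ[ℂ] (H →L[ℂ] H)) {φ : B →L[ℂ] ℂ} (hφ : IsState φ)
    (hvanish : ∀ b, IsCompactOperator (π b) → φ b = 0) :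
    ∃ ξ : ℕ → H, Orthonormal ℂ ξ ∧
      ∀ a, Tendsto (fun n ↦ ⟪ξ n, π a (ξ n)⟫) atTop (nhds (φ a)) := by
  let : PartialOrder B := CStarAlgebra.spectralOrder B
  have : StarOrderedRing B := CStarAlgebra.spectralOrderedRing B
  let T : B →L[ℂ] H →L[ℂ] H := { toLinearMap := π, cont := map_continuous π }
  have hmem : StrongDual.toWeakDual φ ∈ essentialNumericalRange T :=
    mem_essentialNumericalRange_of_forall_re_le _ _ fun _ _ hle ↦ hφ.re_apply_le hvanish hle
  obtain ⟨ξ, hξ, hlim⟩ := exists_orthonormal_tendsto_of_mem_essentialNumericalRange hmem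
  exact ⟨ξ, hξ, tendsto_weakDual_iff.1 hlim⟩

/-- Anderson's theorem: if `A` is a separable C*-algebra, `π` an irreducible representation of
`A` on `H_π`, and `φ` a state of `A` vanishing on `π⁻¹(K(H_π))` with `ker π ⊆ ker π_φ`, then
there is an orthonormal sequence `(ξ_n)` in `H_π` whose vector states `⟨π(·)ξ_n, ξ_n⟩`
converge weak* to `φ`. -/
theorem anderson_orthonormal_vector_states
    (A : Type*) [NonUnitalCStarAlgebra A] [StarModule ℂ A]
    [TopologicalSpace.SeparableSpace A]
    {H : Type*} [NormedAddCommGroup H] [InnerProductSpace ℂ H] [CompleteSpace H]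
    (π : A →⋆ₙₐ[ℂ] (H →L[ℂ] H)) (hπ : IsIrreducibleRep π)
    (φ : A →L[ℂ] ℂ) (hφ : IsState φ)
    (hvanish : ∀ a : A, IsCompactOperator (π a) → φ a = 0)
    (hker : ∀ a : A, π a = 0 →
      φ (star a * a) = 0 ∧ ∀ b : A, φ (star b * (star a * a * b)) = 0) :
    ∃ ξ : ℕ → H, Orthonormal ℂ ξ ∧
      ∀ a : A, Tendsto (fun n => ⟪ξ n, π a (ξ n)⟫) atTop (nhds (φ a)) :=
  anderson_orthonormal_vector_states_general π hφ hvanish
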